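/- Let T > 0, ν > 0, and 2 ≤ p < ∞. Let u : ℝ² × [0,T] → ℝ², ω : ℝ² × [0,T] → ℝ, and θ : ℝ² × [0,T] → ℝ be smooth functions, ℤ²-periodic in x, such that for every t the field u(·,t) is divergence-free, and pointwise on ℝ² × [0,T]: ∂_t ω + u·∇ω = ν ∂₁²ω + ∂₁θ and ∂_t θ + u·∇θ = 0. Then for every t ∈ [0,T]: ‖ω(t)‖_{L^p}² ≤ ‖ω(0)‖_{L^p}² + ((p−1)/(2ν)) ‖θ(0)‖_{L^p}² t, where ‖f‖_{L^p} = (∫_Q |f|^p dx)^{1/p} with Q = [0,1]². -/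

import Mathlib

/-!
The argument is the `Lᵖ` energy estimate. Put `E(t) = ∫_Q |ω(t)|ᵖ`. Differentiating under the
integral (`hasDerivAt_integral_abs_rpow`) and inserting the vorticity equation, the transport term
`∫ u·∇|ω|ᵖ` vanishes because `u` is divergence-free and everything is periodic
(`integral_transport_eq_zero`). Moving one `∂₁` off both `ν ∂₁ω` and `θ` and completing the square
in `∂₁ω` (`integral_forcing_le`) gives
`E' ≤ p (p - 1) / (4ν) ∫ |ω|^(p-2) θ²`,
which Hölder's inequality (`holder_Q2`) bounds by
`p (p - 1) / (4ν) E^((p-2)/p) ‖θ(t)‖ₚ²`.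
The same transport identity shows that `‖θ(t)‖ₚ` is constant in time, so formally
`(E^(2/p))' ≤ (p - 1) / (2ν) ‖θ(0)‖ₚ²`, and integrating in time gives the claim (`rpow_growth`).

The hypothesis `2 ≤ p` makes `x ↦ |x|^(p-2) x` continuously differentiable, so the integrations by
parts hold classically. They all reduce to `integral_div_eq_zero`: a periodic `C¹` vector field has
divergence of mean zero.
-/

open MeasureTheory

/-- Partial derivative in direction `j`. -/
noncomputable def pd (j : Fin 2) (f : (Fin 2 → ℝ) → ℝ) (x : Fin 2 → ℝ) : ℝ :=
  fderiv ℝ f x (Pi.single j 1)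

/-- `f` is `ℤ²`-periodic. -/
def Periodic2 (f : (Fin 2 → ℝ) → ℝ) : Prop :=
  ∀ (x : Fin 2 → ℝ) (k : Fin 2 → ℤ), f (x + fun i => (k i : ℝ)) = f x

/-- The fundamental domain `Q = [0,1]²`. -/
def Q2 : Set (Fin 2 → ℝ) := Set.Icc 0 1

/-- The `Lᵖ` norm over `Q` (for real exponent `p`). -/
noncomputable def lpNorm (p : ℝ) (f : (Fin 2 → ℝ) → ℝ) : ℝ :=
  (∫ x in Q2, |f x| ^ p) ^ (1 / p)

open Set Filter Topology

/-! ### Regularity of powers of the absolute value -/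

lemma continuous_abs_rpow {r : ℝ} (hr : 0 ≤ r) : Continuous (fun x : ℝ => |x| ^ r) :=
  continuous_abs.rpow_const fun _ => Or.inr hr

/-- At `x = 0` the difference quotient is `|y|^(p-2)`. Its limit there is `1` when `p = 2` (as
`0 ^ 0 = 1`) and `0` when `p > 2`, matching the formula in both cases. -/
lemma hasDerivAt_abs_rpow_mul_self {p : ℝ} (hp : 2 ≤ p) (x : ℝ) :
    HasDerivAt (fun y : ℝ => |y| ^ (p - 2) * y) ((p - 1) * |x| ^ (p - 2)) x := by
  rcases eq_or_ne x 0 with rfl | hx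
  · rw [hasDerivAt_iff_tendsto_slope]
    have h0 : (p - 1) * |(0 : ℝ)| ^ (p - 2) = |(0 : ℝ)| ^ (p - 2) := by
      rcases hp.eq_or_lt with rfl | hp'
      · norm_num
      · rw [abs_zero, Real.zero_rpow (by linarith), mul_zero]
    rw [h0]
    have hc := ((continuous_abs_rpow (r := p - 2) (by linarith)).tendsto 0).mono_left
      (nhdsWithin_le_nhds (s := {0}ᶜ))
    refine hc.congr' ?_
    filter_upwards [self_mem_nhdsWithin] with y hy
    have hy : y ≠ 0 := hy
    simp [slope_def_field, hy]
  · have h := ((hasDerivAt_abs hx).rpow_const (p := p - 2)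
      (Or.inl (abs_ne_zero.2 hx))).mul (hasDerivAt_id x)
    refine h.congr_deriv ?_
    have e : |x| ^ (p - 2) = |x| ^ (p - 2 - 1) * |x| := by
      rw [Real.rpow_sub_one (abs_ne_zero.2 hx), div_mul_cancel₀ _ (abs_ne_zero.2 hx)]
    have e2 : (SignType.sign x : ℝ) * x = |x| := by
      rw [mul_comm]; exact self_mul_sign x
    simp only [id, mul_one]
    rw [e]
    linear_combination (p - 2) * |x| ^ (p - 2 - 1) * e2

lemma contDiff_abs_rpow {p : ℝ} (hp : 2 ≤ p) : ContDiff ℝ 1 (fun x : ℝ => |x| ^ p) := by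
  have h : ∀ x : ℝ, HasDerivAt (fun x : ℝ => |x| ^ p) (p * |x| ^ (p - 2) * x) x :=
    fun x => hasDerivAt_abs_rpow x (by linarith)
  rw [contDiff_one_iff_deriv]
  refine ⟨fun x => (h x).differentiableAt, ?_⟩
  rw [show deriv (fun x : ℝ => |x| ^ p) = fun x => p * |x| ^ (p - 2) * x from
    funext fun x => (h x).deriv]
  exact (continuous_const.mul (continuous_abs_rpow (by linarith))).mul continuous_id

lemma contDiff_abs_rpow_mul_self {p : ℝ} (hp : 2 ≤ p) :
    ContDiff ℝ 1 (fun x : ℝ => |x| ^ (p - 2) * x) := by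
  have h := hasDerivAt_abs_rpow_mul_self hp
  rw [contDiff_one_iff_deriv]
  refine ⟨fun x => (h x).differentiableAt, ?_⟩
  rw [show deriv (fun x : ℝ => |x| ^ (p - 2) * x) = fun x => (p - 1) * |x| ^ (p - 2) from
    funext fun x => (h x).deriv]
  exact continuous_const.mul (continuous_abs_rpow (by linarith))

/-! ### Integration over the unit square -/

lemma isCompact_Q2 : IsCompact Q2 := isCompact_Icc

lemma Continuous.integrable_Q2 {f : (Fin 2 → ℝ) → ℝ} (hf : Continuous f) :
    Integrable f (volume.restrict Q2) :=
  hf.continuousOn.integrableOn_compact isCompact_Q2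

lemma continuous_pd {f : (Fin 2 → ℝ) → ℝ} (hf : ContDiff ℝ 1 f) (j : Fin 2) :
    Continuous (pd j f) :=
  (hf.continuous_fderiv one_ne_zero).clm_apply continuous_const

/-- The divergence of a periodic `C¹` vector field integrates to zero over `Q`: in the divergence
theorem the contributions of opposite faces cancel. -/
lemma integral_div_eq_zero {G₀ G₁ : (Fin 2 → ℝ) → ℝ}
    (h₀ : ContDiff ℝ 1 G₀) (h₁ : ContDiff ℝ 1 G₁) (p₀ : Periodic2 G₀) (p₁ : Periodic2 G₁) :
    ∫ x in Q2, (pd 0 G₀ x + pd 1 G₁ x) = 0 := by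
  have hd : ∀ i, ContDiff ℝ 1 ((![G₀, G₁] : Fin 2 → (Fin 2 → ℝ) → ℝ) i) := by
    intro i; fin_cases i <;> assumption
  have hper : ∀ i, Periodic2 ((![G₀, G₁] : Fin 2 → (Fin 2 → ℝ) → ℝ) i) := by
    intro i; fin_cases i <;> assumption
  have key := integral_divergence_of_hasFDerivAt_off_countable' (n := 1)
    (0 : Fin 2 → ℝ) 1 zero_le_one ![G₀, G₁]
    (fun i x => fderiv ℝ ((![G₀, G₁] : Fin 2 → (Fin 2 → ℝ) → ℝ) i) x) ∅ countable_empty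
    (fun i => (hd i).continuous.continuousOn)
    (fun x _ i => ((hd i).differentiable one_ne_zero x).hasFDerivAt)
    (Continuous.integrable_Q2 (continuous_finsetSum _ fun i _ => continuous_pd (hd i) i))
  have e : ∀ x, pd 0 G₀ x + pd 1 G₁ x = ∑ i : Fin 2,
      fderiv ℝ ((![G₀, G₁] : Fin 2 → (Fin 2 → ℝ) → ℝ) i) x (Pi.single i 1) := by
    intro x; simp [Fin.sum_univ_two, pd]
  simp_rw [e]
  refine key.trans (Finset.sum_eq_zero fun i _ => ?_)
  rw [sub_eq_zero]
  refine integral_congr_ae (ae_of_all _ fun y => ?_)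
  -- the two faces differ by the integer translation along `i`
  have := hper i (i.insertNth ((0 : Fin 2 → ℝ) i) y) (Pi.single i 1)
  beta_reduce
  rw [← this]
  refine congrArg _ (funext fun k => ?_)
  refine Fin.succAboveCases i ?_ (fun k => ?_) k <;> simp

/-- Differentiation under the integral sign; the derivative is dominated by its maximum on the
compact set `[t - 1, t + 1] × Q`. -/
lemma hasDerivAt_integral_Q2 {F F' : ℝ → (Fin 2 → ℝ) → ℝ}
    (hF : ∀ t, Continuous (F t)) (hF' : Continuous (fun q : ℝ × (Fin 2 → ℝ) => F' q.1 q.2))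
    (hd : ∀ t x, HasDerivAt (fun s => F s x) (F' t x) t) (t : ℝ) :
    HasDerivAt (fun s => ∫ x in Q2, F s x) (∫ x in Q2, F' t x) t := by
  obtain ⟨C, hC⟩ := ((isCompact_Icc (a := t - 1) (b := t + 1)).prod isCompact_Q2).exists_bound_of_continuousOn
    hF'.continuousOn
  refine (hasDerivAt_integral_of_dominated_loc_of_deriv_le (s := Icc (t - 1) (t + 1))
    (bound := fun _ => C) (Icc_mem_nhds (by linarith) (by linarith))
    (Eventually.of_forall fun s => (hF s).integrable_Q2.aestronglyMeasurable)
    (hF t).integrable_Q2 (F' := F') ?_ ?_ ?_ ?_).2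
  · exact (Continuous.integrable_Q2 (by fun_prop)).aestronglyMeasurable
  · refine (ae_restrict_iff' isCompact_Q2.measurableSet).2 (ae_of_all _ fun x hx s hs => ?_)
    exact hC (s, x) ⟨hs, hx⟩
  · exact Continuous.integrable_Q2 continuous_const
  · exact ae_of_all _ fun x s _ => hd s x

/-- Hölder's inequality with exponents `p / (p - 2)` and `p / 2`; for `p = 2` it is an equality. -/
lemma holder_Q2 {p : ℝ} (hp : 2 ≤ p) {f g : (Fin 2 → ℝ) → ℝ}
    (hf : Continuous f) (hg : Continuous g) :
    ∫ x in Q2, |f x| ^ (p - 2) * g x ^ 2 ≤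
      (∫ x in Q2, |f x| ^ p) ^ ((p - 2) / p) * (∫ x in Q2, |g x| ^ p) ^ (2 / p) := by
  rcases hp.eq_or_lt with rfl | hp'
  · simp
  have h1 : Continuous fun x => |f x| ^ (p - 2) :=
    (continuous_abs_rpow (by linarith)).comp hf
  have h2 : Continuous fun x => g x ^ 2 := by fun_prop
  have hm : ∀ {h : (Fin 2 → ℝ) → ℝ} (r : ENNReal), Continuous h →
      MemLp h r (volume.restrict Q2) := by
    intro h r hh
    have : IsFiniteMeasure (volume.restrict Q2) :=
      ⟨by simpa using isCompact_Q2.measure_lt_top⟩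
    obtain ⟨C, hC⟩ := isCompact_Q2.exists_bound_of_continuousOn hh.continuousOn
    exact MemLp.of_bound hh.integrable_Q2.aestronglyMeasurable C
      ((ae_restrict_iff' isCompact_Q2.measurableSet).2 (ae_of_all _ hC))
  have hp0 : 0 < p := by linarith
  have hp2 : 0 < p - 2 := by linarith
  have := integral_mul_le_Lp_mul_Lq_of_nonneg (μ := volume.restrict Q2)
    (p := p / (p - 2)) (q := p / 2)
    ⟨by field_simp; ring, by positivity, by positivity⟩
    (ae_of_all _ fun x => by positivity) (ae_of_all _ fun x => by positivity)
    (hm _ h1) (hm _ h2)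
  have e1 : ∀ x, (|f x| ^ (p - 2)) ^ (p / (p - 2)) = |f x| ^ p := fun x => by
    rw [← Real.rpow_mul (abs_nonneg _)]; congr 1; field_simp
  have e2 : ∀ x, (g x ^ 2) ^ (p / 2) = |g x| ^ p := fun x => by
    rw [← sq_abs, ← Real.rpow_natCast, ← Real.rpow_mul (abs_nonneg _)]
    congr 1; push_cast; field_simp
  simpa only [e1, e2, one_div_div] using this

/-! ### Calculus of partial derivatives -/

lemma pd_mul {f g : (Fin 2 → ℝ) → ℝ} (hf : ContDiff ℝ 1 f) (hg : ContDiff ℝ 1 g) (j : Fin 2)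
    (x : Fin 2 → ℝ) : pd j (fun y => f y * g y) x = pd j f x * g x + f x * pd j g x := by
  unfold pd
  rw [fderiv_fun_mul (hf.differentiable one_ne_zero x) (hg.differentiable one_ne_zero x)]
  simp; ring

lemma pd_add {f g : (Fin 2 → ℝ) → ℝ} (hf : ContDiff ℝ 1 f) (hg : ContDiff ℝ 1 g) (j : Fin 2)
    (x : Fin 2 → ℝ) : pd j (fun y => f y + g y) x = pd j f x + pd j g x := by
  unfold pd
  rw [fderiv_fun_add (hf.differentiable one_ne_zero x) (hg.differentiable one_ne_zero x)]
  simp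

lemma pd_neg (f : (Fin 2 → ℝ) → ℝ) (j : Fin 2)
    (x : Fin 2 → ℝ) : pd j (fun y => - f y) x = - pd j f x := by
  unfold pd
  rw [fderiv_fun_neg]; simp

lemma pd_const_mul (c : ℝ) {f : (Fin 2 → ℝ) → ℝ} (hf : ContDiff ℝ 1 f) (j : Fin 2)
    (x : Fin 2 → ℝ) : pd j (fun y => c * f y) x = c * pd j f x := by
  unfold pd
  rw [fderiv_const_mul (hf.differentiable one_ne_zero x)]; simp

lemma pd_comp {φ : ℝ → ℝ} {φ' : ℝ} {f : (Fin 2 → ℝ) → ℝ} (hf : ContDiff ℝ 1 f) (j : Fin 2)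
    (x : Fin 2 → ℝ) (hφ : HasDerivAt φ φ' (f x)) :
    pd j (fun y => φ (f y)) x = φ' * pd j f x := by
  unfold pd
  have := hφ.comp_hasFDerivAt x (hf.differentiable one_ne_zero x).hasFDerivAt
  rw [show (fun y => φ (f y)) = φ ∘ f from rfl, this.fderiv]; simp

lemma Periodic2.pd {f : (Fin 2 → ℝ) → ℝ} (hf : Periodic2 f) (j : Fin 2) :
    Periodic2 (pd j f) := by
  intro x k
  unfold _root_.pd
  rw [← fderiv_comp_add_right, show (fun y => f (y + fun i => (k i : ℝ))) = f from
    funext fun y => hf y k]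

/-! ### The differential inequality -/

/-- A nonlinear Grönwall inequality: `E' ≤ (p / 2) K E^((p-2)/p)` says formally that
`(E^(2/p))' ≤ K`. -/
lemma rpow_growth {p T K : ℝ} (hp : 2 ≤ p) (hK : 0 ≤ K) {E E' : ℝ → ℝ}
    (hE : ∀ t, HasDerivAt E (E' t) t) (hE0 : ∀ t, 0 ≤ E t)
    (hE' : ∀ t ∈ Icc 0 T, E' t ≤ p / 2 * K * E t ^ ((p - 2) / p)) :
    ∀ t ∈ Icc 0 T, E t ^ (2 / p) ≤ E 0 ^ (2 / p) + K * t := by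
  intro t ht
  have hp0 : 0 < p := by linarith
  -- `E` may vanish, where `E ^ (2 / p)` need not be differentiable, so `E + ε` is used instead
  have main : ∀ ε : ℝ, 0 < ε → (E t + ε) ^ (2 / p) ≤ (E 0 + ε) ^ (2 / p) + K * t := by
    intro ε hε
    have hd : ∀ s, HasDerivAt (fun s => (E s + ε) ^ (2 / p) - K * s)
        (E' s * (2 / p) * (E s + ε) ^ (2 / p - 1) - K * 1) s := fun s =>
      (((hE s).add_const ε).rpow_const (Or.inl (by linarith [hE0 s]))).sub
        ((hasDerivAt_id s).const_mul K)
    have hanti : AntitoneOn (fun s => (E s + ε) ^ (2 / p) - K * s) (Icc 0 T) := by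
      refine antitoneOn_of_deriv_nonpos (convex_Icc 0 T)
        (fun s _ => (hd s).continuousAt.continuousWithinAt)
        (fun s _ => (hd s).differentiableAt.differentiableWithinAt) fun s hs => ?_
      rw [(hd s).deriv]
      have hs' := hE' s (interior_subset hs)
      have hpos : 0 < E s + ε := by linarith [hE0 s]
      have hmono : E s ^ ((p - 2) / p) ≤ (E s + ε) ^ ((p - 2) / p) :=
        Real.rpow_le_rpow (hE0 s) (by linarith) (div_nonneg (by linarith) hp0.le)
      have hinv : (E s + ε) ^ ((p - 2) / p) * (E s + ε) ^ (2 / p - 1) = 1 := by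
        rw [← Real.rpow_add hpos, show (p - 2) / p + (2 / p - 1) = 0 by field_simp; ring,
          Real.rpow_zero]
      have hq : 0 < (E s + ε) ^ (2 / p - 1) := Real.rpow_pos_of_pos hpos _
      have : E' s * (2 / p) * (E s + ε) ^ (2 / p - 1) ≤ K := by
        calc E' s * (2 / p) * (E s + ε) ^ (2 / p - 1)
            ≤ (p / 2 * K * (E s + ε) ^ ((p - 2) / p)) * (2 / p) * (E s + ε) ^ (2 / p - 1) := by
              gcongr
              exact hs'.trans (by gcongr)
          _ = K * ((E s + ε) ^ ((p - 2) / p) * (E s + ε) ^ (2 / p - 1)) := by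
              field_simp
          _ = K := by rw [hinv, mul_one]
      linarith
    have := hanti (left_mem_Icc.2 (ht.1.trans ht.2)) ht ht.1
    simp only [mul_zero, sub_zero] at this
    linarith
  have hlim : ∀ a : ℝ, Tendsto (fun ε : ℝ => (a + ε) ^ (2 / p)) (𝓝[>] 0) (𝓝 (a ^ (2 / p))) := by
    intro a
    have hc : Continuous fun ε : ℝ => (a + ε) ^ (2 / p) :=
      (continuous_const.add continuous_id).rpow_const fun _ => Or.inr (by positivity)
    simpa using (hc.tendsto 0).mono_left (nhdsWithin_le_nhds (s := Ioi 0))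
  refine le_of_tendsto_of_tendsto (hlim _) ((hlim _).add_const (K * t)) ?_
  filter_upwards [self_mem_nhdsWithin] with ε hε using main ε hε

/-! ### Energy estimates at a fixed time -/

/-- The integrand is `v·∇|f|ᵖ = div (|f|ᵖ v)`. -/
lemma integral_transport_eq_zero {p : ℝ} (hp : 2 ≤ p) {f v₀ v₁ : (Fin 2 → ℝ) → ℝ}
    (hf : ContDiff ℝ 1 f) (hv₀ : ContDiff ℝ 1 v₀) (hv₁ : ContDiff ℝ 1 v₁)
    (pf : Periodic2 f) (pv₀ : Periodic2 v₀) (pv₁ : Periodic2 v₁)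
    (hdiv : ∀ x, pd 0 v₀ x + pd 1 v₁ x = 0) :
    ∫ x in Q2, p * |f x| ^ (p - 2) * f x * (v₀ x * pd 0 f x + v₁ x * pd 1 f x) = 0 := by
  have hΦ : ContDiff ℝ 1 fun x => |f x| ^ p := (contDiff_abs_rpow hp).comp hf
  rw [← integral_div_eq_zero (hv₀.mul hΦ) (hv₁.mul hΦ)
    (fun x k => by simp only [pf x k, pv₀ x k]) (fun x k => by simp only [pf x k, pv₁ x k])]
  refine integral_congr_ae (ae_of_all _ fun x => ?_)
  have hc : ∀ j, pd j (fun y => |f y| ^ p) x = p * |f x| ^ (p - 2) * f x * pd j f x := fun j =>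
    pd_comp (φ := fun z => |z| ^ p) hf j x (hasDerivAt_abs_rpow (f x) (by linarith))
  beta_reduce
  rw [pd_mul hv₀ hΦ, pd_mul hv₁ hΦ, hc, hc]
  linear_combination - |f x| ^ p * hdiv x

/-- With `ψ = p |w|^(p-2) w`, the integrand on the left is
`∂₁(ψ (ν ∂₁w + g)) - p (p - 1) |w|^(p-2) (ν (∂₁w)² + g ∂₁w)`, and
`-(ν a² + g a) ≤ g² / (4ν)` for every real `a`. -/
lemma integral_forcing_le {p ν : ℝ} (hp : 2 ≤ p) (hν : 0 < ν) {w g : (Fin 2 → ℝ) → ℝ}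
    (hw : ContDiff ℝ 1 w) (hw₁ : ContDiff ℝ 1 (pd 0 w)) (hg : ContDiff ℝ 1 g)
    (pw : Periodic2 w) (pg : Periodic2 g) :
    ∫ x in Q2, p * |w x| ^ (p - 2) * w x * (ν * pd 0 (pd 0 w) x + pd 0 g x) ≤
      p * (p - 1) / (4 * ν) * ∫ x in Q2, |w x| ^ (p - 2) * g x ^ 2 := by
  have hψ : ContDiff ℝ 1 fun x => |w x| ^ (p - 2) * w x := (contDiff_abs_rpow_mul_self hp).comp hw
  have hνg : ContDiff ℝ 1 fun x => ν * pd 0 w x + g x := (contDiff_const.mul hw₁).add hg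
  have hG := contDiff_const (c := p).mul (hψ.mul hνg)
  have pG : Periodic2 fun x => p * (|w x| ^ (p - 2) * w x * (ν * pd 0 w x + g x)) :=
    fun x k => by simp only [pw x k, pg x k, pw.pd 0 x k]
  have h0 : ContDiff ℝ 1 fun _ : Fin 2 → ℝ => (0 : ℝ) := contDiff_const
  have hz := integral_div_eq_zero hG h0 pG (fun _ _ => rfl)
  have ca : Continuous fun x => |w x| ^ (p - 2) :=
    (continuous_abs_rpow (by linarith)).comp hw.continuous
  have cw := hw.continuous
  have cg := hg.continuous
  have cw1 := hw₁.continuous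
  have cw11 := continuous_pd hw₁ 0
  have cg1 := continuous_pd hg 0
  rw [← integral_const_mul, ← sub_nonpos, ← hz, ← integral_sub
    (Continuous.integrable_Q2 (by fun_prop)) (Continuous.integrable_Q2 (by fun_prop))]
  refine integral_mono (Continuous.integrable_Q2 (by fun_prop))
    (Continuous.integrable_Q2 ((continuous_pd hG 0).add (continuous_pd h0 1))) fun x => ?_
  have e : pd 1 (fun _ : Fin 2 → ℝ => (0 : ℝ)) x = 0 := by simp [pd]
  have hc : pd 0 (fun y => |w y| ^ (p - 2) * w y) x = (p - 1) * |w x| ^ (p - 2) * pd 0 w x :=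
    pd_comp (φ := fun z => |z| ^ (p - 2) * z) hw 0 x (hasDerivAt_abs_rpow_mul_self hp (w x))
  beta_reduce
  rw [e, pd_const_mul p (hψ.mul hνg), pd_mul hψ hνg, hc, pd_add (contDiff_const.mul hw₁) hg,
    pd_const_mul ν hw₁, ← sub_nonneg]
  -- completing the square in `∂₁ω`
  have sq : 0 ≤ p * (p - 1) / (4 * ν) * |w x| ^ (p - 2) * (2 * ν * pd 0 w x + g x) ^ 2 := by
    have : 0 ≤ p - 1 := by linarith
    have : 0 ≤ p := by linarith
    positivity
  refine sq.trans_eq ?_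
  field_simp
  ring

/-! ### Evolution of the `Lᵖ` norm -/

lemma continuous_deriv_time {f : ℝ → (Fin 2 → ℝ) → ℝ}
    (hf : ContDiff ℝ 1 (fun q : ℝ × (Fin 2 → ℝ) => f q.1 q.2)) :
    (∀ t x, HasDerivAt (fun s => f s x) (deriv (fun s => f s x) t) t) ∧
      Continuous (fun q : ℝ × (Fin 2 → ℝ) => deriv (fun s => f s q.2) q.1) := by
  have h : ∀ t x, HasDerivAt (fun s => f s x)
      (fderiv ℝ (fun q : ℝ × (Fin 2 → ℝ) => f q.1 q.2) (t, x) (1, 0)) t := fun t x =>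
    HasFDerivAt.comp_hasDerivAt (l := fun q : ℝ × (Fin 2 → ℝ) => f q.1 q.2)
      (f := fun s => (s, x)) t (hf.differentiable one_ne_zero (t, x)).hasFDerivAt
      ((hasDerivAt_id t).prodMk (hasDerivAt_const t x))
  refine ⟨fun t x => (h t x).differentiableAt.hasDerivAt, ?_⟩
  simp_rw [fun t x => (h t x).deriv]
  exact (hf.continuous_fderiv one_ne_zero).clm_apply continuous_const

lemma hasDerivAt_integral_abs_rpow {p : ℝ} (hp : 2 ≤ p) {f : ℝ → (Fin 2 → ℝ) → ℝ}
    (hf : ContDiff ℝ 1 (fun q : ℝ × (Fin 2 → ℝ) => f q.1 q.2)) (t : ℝ) :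
    HasDerivAt (fun s => ∫ x in Q2, |f s x| ^ p)
      (∫ x in Q2, p * |f t x| ^ (p - 2) * f t x * deriv (fun s => f s x) t) t := by
  obtain ⟨hd, hc⟩ := continuous_deriv_time hf
  refine hasDerivAt_integral_Q2 (F := fun s x => |f s x| ^ p)
    (F' := fun t x => p * |f t x| ^ (p - 2) * f t x * deriv (fun s => f s x) t) ?_ ?_ ?_ t
  · intro s
    have : Continuous (f s) := hf.continuous.comp (Continuous.prodMk_right s)
    exact (continuous_abs_rpow (by linarith)).comp this
  · exact ((continuous_const.mul ((continuous_abs_rpow (r := p - 2) (by linarith)).comp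
      hf.continuous)).mul hf.continuous).mul hc
  · intro s x
    exact (hasDerivAt_abs_rpow (f s x) (by linarith)).comp s (hd s x)

lemma lpNorm_sq {p : ℝ} (f : (Fin 2 → ℝ) → ℝ) :
    lpNorm p f ^ 2 = (∫ x in Q2, |f x| ^ p) ^ (2 / p) := by
  have h : 0 ≤ ∫ x in Q2, |f x| ^ p := integral_nonneg fun x => by positivity
  unfold _root_.lpNorm
  rw [← Real.rpow_natCast, ← Real.rpow_mul h]
  congr 1; push_cast; ring

theorem stmt11
    (T ν p : ℝ) (hT : 0 < T) (hν : 0 < ν) (hp : 2 ≤ p)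
    (u : ℝ → (Fin 2 → ℝ) → (Fin 2 → ℝ)) (ω θ : ℝ → (Fin 2 → ℝ) → ℝ)
    (hu : ContDiff ℝ (⊤ : ℕ∞) (fun q : ℝ × (Fin 2 → ℝ) => u q.1 q.2))
    (hω : ContDiff ℝ (⊤ : ℕ∞) (fun q : ℝ × (Fin 2 → ℝ) => ω q.1 q.2))
    (hθ : ContDiff ℝ (⊤ : ℕ∞) (fun q : ℝ × (Fin 2 → ℝ) => θ q.1 q.2))
    (hup : ∀ t i, Periodic2 (fun x => u t x i))
    (hωp : ∀ t, Periodic2 (ω t)) (hθp : ∀ t, Periodic2 (θ t))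
    (hdiv : ∀ t x, ∑ j : Fin 2, pd j (fun y => u t y j) x = 0)
    (hvort : ∀ t ∈ Set.Icc (0 : ℝ) T, ∀ x,
      deriv (fun s => ω s x) t + ∑ j : Fin 2, u t x j * pd j (ω t) x
        = ν * pd 0 (pd 0 (ω t)) x + pd 0 (θ t) x)
    (htheta : ∀ t ∈ Set.Icc (0 : ℝ) T, ∀ x,
      deriv (fun s => θ s x) t + ∑ j : Fin 2, u t x j * pd j (θ t) x = 0) :
    ∀ t ∈ Set.Icc (0 : ℝ) T,
      lpNorm p (ω t) ^ 2
        ≤ lpNorm p (ω 0) ^ 2 + ((p - 1) / (2 * ν)) * lpNorm p (θ 0) ^ 2 * t := by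
  have hp0 : 0 < p := by linarith
  have hω1 : ContDiff ℝ 1 (fun q : ℝ × (Fin 2 → ℝ) => ω q.1 q.2) := hω.of_le (mod_cast le_top)
  have hθ1 : ContDiff ℝ 1 (fun q : ℝ × (Fin 2 → ℝ) => θ q.1 q.2) := hθ.of_le (mod_cast le_top)
  have hmk : ∀ t : ℝ, ContDiff ℝ (⊤ : ℕ∞) fun x : Fin 2 → ℝ => (t, x) := fun t =>
    contDiff_const.prodMk contDiff_id
  have sω : ∀ t, ContDiff ℝ (⊤ : ℕ∞) (ω t) := fun t => hω.comp (hmk t)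
  have sθ : ∀ t, ContDiff ℝ 1 (θ t) := fun t => (hθ.comp (hmk t)).of_le (mod_cast le_top)
  have sω1 : ∀ t, ContDiff ℝ 1 (ω t) := fun t => (sω t).of_le (mod_cast le_top)
  have sdω : ∀ t, ContDiff ℝ 1 (pd 0 (ω t)) := fun t =>
    ((sω t).fderiv_right (m := 1) (WithTop.coe_le_coe.2 le_top)).clm_apply contDiff_const
  have su : ∀ t i, ContDiff ℝ 1 (fun x => u t x i) := fun t i =>
    (contDiff_pi.1 (hu.comp (hmk t)) i).of_le (mod_cast le_top)
  have hdiv' : ∀ t x, pd 0 (fun y => u t y 0) x + pd 1 (fun y => u t y 1) x = 0 := fun t x => by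
    simpa [Fin.sum_univ_two] using hdiv t x
  have transport : ∀ {f : ℝ → (Fin 2 → ℝ) → ℝ} (t : ℝ), ContDiff ℝ 1 (f t) → Periodic2 (f t) →
      ∫ x in Q2, p * |f t x| ^ (p - 2) * f t x *
        (u t x 0 * pd 0 (f t) x + u t x 1 * pd 1 (f t) x) = 0 := fun t hf pf =>
    integral_transport_eq_zero hp hf (su t 0) (su t 1) pf (hup t 0) (hup t 1) (hdiv' t)
  have hθconst : ∀ t ∈ Icc 0 T, ∫ x in Q2, |θ t x| ^ p = ∫ x in Q2, |θ 0 x| ^ p := by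
    have hd := hasDerivAt_integral_abs_rpow hp hθ1
    refine constant_of_has_deriv_right_zero
      (fun s _ => (hd s).continuousAt.continuousWithinAt) fun s hs => ?_
    refine ((hd s).congr_deriv ?_).hasDerivWithinAt
    rw [← neg_zero, ← transport s (sθ s) (hθp s), ← integral_neg]
    refine integral_congr_ae (ae_of_all _ fun x => ?_)
    have := htheta s ⟨hs.1, hs.2.le⟩ x
    rw [Fin.sum_univ_two] at this
    linear_combination p * |θ s x| ^ (p - 2) * θ s x * this
  simp only [lpNorm_sq]
  refine rpow_growth hp
    (mul_nonneg (div_nonneg (by linarith) (by positivity))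
      (Real.rpow_nonneg (integral_nonneg fun x => by positivity) _))
    (hasDerivAt_integral_abs_rpow hp hω1) (fun t => integral_nonneg fun x => by positivity)
    fun t ht => ?_
  have cω := (sω1 t).continuous
  have ca : Continuous fun x => |ω t x| ^ (p - 2) :=
    (continuous_abs_rpow (by linarith)).comp cω
  have cd0 := continuous_pd (sω1 t) 0
  have cd1 := continuous_pd (sω1 t) 1
  have cd00 := continuous_pd (sdω t) 0
  have cθ := continuous_pd (sθ t) 0
  have cu := fun i => (su t i).continuous
  have cu0 := cu 0
  have cu1 := cu 1
  have split : ∫ x in Q2, p * |ω t x| ^ (p - 2) * ω t x * deriv (fun s => ω s x) t =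
      ∫ x in Q2, p * |ω t x| ^ (p - 2) * ω t x * (ν * pd 0 (pd 0 (ω t)) x + pd 0 (θ t) x) := by
    rw [← sub_zero (∫ x in Q2, p * |ω t x| ^ (p - 2) * ω t x *
      (ν * pd 0 (pd 0 (ω t)) x + pd 0 (θ t) x)), ← transport t (sω1 t) (hωp t),
      ← integral_sub (Continuous.integrable_Q2 (by fun_prop))
        (Continuous.integrable_Q2 (by fun_prop))]
    refine integral_congr_ae (ae_of_all _ fun x => ?_)
    have := hvort t ht x
    rw [Fin.sum_univ_two] at this
    linear_combination p * |ω t x| ^ (p - 2) * ω t x * this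
  have hc : 0 ≤ p * (p - 1) / (4 * ν) :=
    div_nonneg (mul_nonneg hp0.le (by linarith)) (by positivity)
  calc ∫ x in Q2, p * |ω t x| ^ (p - 2) * ω t x * deriv (fun s => ω s x) t
      ≤ p * (p - 1) / (4 * ν) * ∫ x in Q2, |ω t x| ^ (p - 2) * θ t x ^ 2 :=
        split.trans_le (integral_forcing_le hp hν (sω1 t) (sdω t) (sθ t) (hωp t) (hθp t))
    _ ≤ p * (p - 1) / (4 * ν) * ((∫ x in Q2, |ω t x| ^ p) ^ ((p - 2) / p) *
          (∫ x in Q2, |θ t x| ^ p) ^ (2 / p)) :=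
        mul_le_mul_of_nonneg_left (holder_Q2 hp cω (sθ t).continuous) hc
    _ = _ := by
        rw [hθconst t ht]
        field_simp
        ring
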